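/- Let λ ∈ Λ_I⁺, β ∈ Φ \ Φ_λ, and γ, ν ∈ Φ_{β,2}. Then sgn(s_γλ, s_νλ) = sgn(s_γ(λ|_{Φ_{β,2}}), s_ν(λ|_{Φ_{β,2}}), Φ_I ∩ Φ_{β,2}, Φ_{β,2}). -/

import Mathlib

open scoped RealInnerProductSpace
open Classical

noncomputable section

namespace JantzenGVM

variable {V : Type*} [NormedAddCommGroup V] [InnerProductSpace ℝ V] [FiniteDimensional ℝ V]

/-- The coroot `α^∨ = 2α/⟨α,α⟩` of a vector `α` (junk value `0` when `α = 0`). -/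
def coroot (α : V) : V := (2 / ⟪α, α⟫) • α

/-- The linear functional `v ↦ ⟨v, α^∨⟩`. -/
def corootForm (α : V) : V →ₗ[ℝ] ℝ where
  toFun v := ⟪v, coroot α⟫
  map_add' x y := by simp [inner_add_left]
  map_smul' c x := by simp [inner_smul_left]

lemma corootForm_self {α : V} (h : ⟪α, α⟫ ≠ 0) : corootForm α α = 2 := by
  simp only [corootForm, coroot, LinearMap.coe_mk, AddHom.coe_mk, real_inner_smul_right]
  field_simp

/-- The reflection `s_α` as a linear automorphism of `V` (the identity when `⟨α,α⟩ = 0`). -/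
def reflV (α : V) : V ≃ₗ[ℝ] V :=
  if h : ⟪α, α⟫ = 0 then LinearEquiv.refl ℝ V
  else Module.reflection (corootForm_self h)

/-- `h* = ℂ ⊗ V`, realized as the space of real-linear functionals `V → ℂ` via the
inner product; an element `λ` pairs with a root `α` by `⟨λ, α⟩ = λ α` and with the
coroot by `⟨λ, α^∨⟩ = λ (coroot α)`. -/
abbrev HStar (V : Type*) [NormedAddCommGroup V] [InnerProductSpace ℝ V] := V →ₗ[ℝ] ℂ

/-- The canonical embedding of `V` into `h*`. -/
def emb (α : V) : HStar V where
  toFun v := (⟪α, v⟫ : ℂ)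
  map_add' x y := by simp [inner_add_right]
  map_smul' c x := by simp [inner_smul_right, Complex.real_smul]

/-- The action of a linear automorphism `w` of `V` on `h*`: `(w • λ)(v) = λ(w⁻¹ v)`. -/
def wAct (w : V ≃ₗ[ℝ] V) (l : HStar V) : HStar V := l ∘ₗ (w.symm : V →ₗ[ℝ] V)

/-- The reflection `s_β λ = λ - ⟨λ, β^∨⟩ β` acting on `h*`. -/
def sRefl (β : V) (l : HStar V) : HStar V := l - l (coroot β) • emb β

/-- The group generated by the reflections in the elements of `Φ'`. -/
def weyl (Φ' : Set V) : Subgroup (V ≃ₗ[ℝ] V) :=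
  Subgroup.closure {w | ∃ α ∈ Φ', w = reflV α}

/-- A finite, reduced, crystallographic root system spanning the Euclidean space `V`,
together with a choice of positive system and the corresponding simple system. -/
structure RootSys (V : Type*) [NormedAddCommGroup V] [InnerProductSpace ℝ V]
    [FiniteDimensional ℝ V] where
  Φ : Finset V
  pos : Finset V
  Δ : Finset V
  ne_zero : ∀ α ∈ Φ, α ≠ (0 : V)
  span_eq_top : Submodule.span ℝ (Φ : Set V) = ⊤
  reduced : ∀ α ∈ Φ, ∀ c : ℝ, c • α ∈ Φ → c = 1 ∨ c = -1
  refl_mem : ∀ α ∈ Φ, ∀ β ∈ Φ, reflV α β ∈ Φ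
  crystallographic : ∀ α ∈ Φ, ∀ β ∈ Φ, ∃ n : ℤ, ⟪β, coroot α⟫ = (n : ℝ)
  pos_subset : pos ⊆ Φ
  mem_pos_or : ∀ α ∈ Φ, α ∈ pos ∨ -α ∈ pos
  not_both : ∀ α ∈ pos, -α ∉ pos
  simple_subset : Δ ⊆ pos
  simple_indep : LinearIndependent ℝ (fun x : {a : V // a ∈ Δ} => x.1)
  simple_gen : ∀ β ∈ pos, ∃ c : V → ℝ, (∀ α ∈ Δ, 0 ≤ c α) ∧ β = ∑ α ∈ Δ, c α • α

/-- A subsystem of the root system: a subset of `Φ` closed under its own reflections. -/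
def IsSubsystem (S : RootSys V) (Φ' : Set V) : Prop :=
  Φ' ⊆ (S.Φ : Set V) ∧ ∀ α ∈ Φ', ∀ β ∈ Φ', reflV α β ∈ Φ'

/-- The length of `w`, i.e. the number of positive roots sent to negative roots
(this equals the Coxeter length for elements of the Weyl group). -/
def len (S : RootSys V) (w : V ≃ₗ[ℝ] V) : ℕ :=
  {β ∈ (S.pos : Set V) | w β ∉ (S.pos : Set V)}.ncard

/-- `Φ_I = ℤI ∩ Φ`, the subsystem generated by a subset `I` of the simple roots. -/
def PhiI (S : RootSys V) (I : Finset V) : Set V :=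
  {α ∈ (S.Φ : Set V) | α ∈ Submodule.span ℤ (I : Set V)}

/-- `z` is a positive integer. -/
def IsPosInt (z : ℂ) : Prop := ∃ n : ℤ, 0 < n ∧ z = (n : ℂ)

/-- `z` is an integer. -/
def IsInt (z : ℂ) : Prop := ∃ n : ℤ, z = (n : ℂ)

/-- `Λ_I⁺ = {λ ∈ h* : ⟨λ, α^∨⟩ ∈ ℤ_{>0} for all α ∈ I}`. -/
def LambdaP (I : Set V) : Set (HStar V) :=
  {l | ∀ α ∈ I, IsPosInt (l (coroot α))}

/-- `Λ⁺(Φ'', Φ') = {ν ∈ ℂΦ' : ⟨ν, α^∨⟩ ∈ ℤ_{>0} for all α ∈ Φ'' ∩ Φ⁺}`. -/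
def LambdaPSub (S : RootSys V) (Φ'' Φ' : Set V) : Set (HStar V) :=
  {l | l ∈ Submodule.span ℂ (emb '' Φ') ∧
       ∀ α ∈ Φ'' ∩ (S.pos : Set V), IsPosInt (l (coroot α))}

/-- `λ` is `Φ''`-regular: `⟨λ, α⟩ ≠ 0` for all `α ∈ Φ''`. -/
def IsRegularOn (Φ'' : Set V) (l : HStar V) : Prop := ∀ α ∈ Φ'', l α ≠ 0

/-- `Ψ⁺(λ, Φ'', Φ') = {β ∈ (Φ' ∩ Φ⁺) \ Φ'' : ⟨λ, β^∨⟩ ∈ ℤ_{>0}}`. -/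
def PsiP (S : RootSys V) (Φ'' Φ' : Set V) (l : HStar V) : Set V :=
  {β | β ∈ Φ' ∩ (S.pos : Set V) ∧ β ∉ Φ'' ∧ IsPosInt (l (coroot β))}

/-- `Ψ⁺⁺(λ, Φ'', Φ') = {β ∈ Ψ⁺(λ, Φ'', Φ') : s_β λ is Φ''-regular}`. -/
def PsiPP (S : RootSys V) (Φ'' Φ' : Set V) (l : HStar V) : Set V :=
  {β ∈ PsiP S Φ'' Φ' l | ∀ α ∈ Φ'', (sRefl β l) α ≠ 0}

/-- The sign function: `sgn(λ, μ) = (-1)^{ℓ(w)}` if `λ, μ` are `Φ''`-regular and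
`μ = wλ` for some `w ∈ W(Φ'')`, and `0` otherwise. -/
def sgnW (S : RootSys V) (Φ'' : Set V) (l m : HStar V) : ℤ :=
  if h : IsRegularOn Φ'' l ∧ IsRegularOn Φ'' m ∧ ∃ w, w ∈ weyl Φ'' ∧ m = wAct w l
  then (-1) ^ len S h.2.2.choose else 0

/-- The Jantzen coefficient `c(λ, μ, Φ'', Φ') = Σ_{β ∈ Ψ⁺⁺(λ,Φ'',Φ')} sgn(s_β λ, μ)`. -/
def jc (S : RootSys V) (Φ'' Φ' : Set V) (l m : HStar V) : ℤ :=
  ∑ᶠ β ∈ PsiPP S Φ'' Φ' l, sgnW S Φ'' (sRefl β l) m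

/-- The symmetrized Jantzen coefficient `c̃(λ, μ, Φ'', Φ')`. -/
def jcSym (S : RootSys V) (Φ'' Φ' : Set V) (l m : HStar V) : ℤ :=
  jc S Φ'' Φ' l m + jc S Φ'' Φ' m l

/-- `θ(λ) = Σ_{w ∈ W_I} (-1)^{ℓ(w)} e^{wλ}` in the free `ℤ`-module on `h*`. -/
def theta (S : RootSys V) (I : Finset V) (l : HStar V) : HStar V →₀ ℤ :=
  ∑ᶠ w ∈ (weyl (PhiI S I) : Set (V ≃ₗ[ℝ] V)),
    Finsupp.single (wAct w l) ((-1) ^ len S w)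

/-- `Φ_λ = {α ∈ Φ : ⟨λ, α⟩ = 0}`. -/
def singSet (S : RootSys V) (l : HStar V) : Set V :=
  {α ∈ (S.Φ : Set V) | l α = 0}

/-- `Φ_{[λ]} = {α ∈ Φ : ⟨λ, α^∨⟩ ∈ ℤ}`. -/
def integralSet (S : RootSys V) (l : HStar V) : Set V :=
  {α ∈ (S.Φ : Set V) | IsInt (l (coroot α))}

/-- `(ℚ A) ∩ Φ`, the intersection of the rational span of `A` with `Φ`.
Taking `A = Φ_I ∪ {β}` gives `Φ_{β,1}`; taking `A = Φ_λ ∪ {β}` gives `Φ_{β,2}`. -/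
def ratSpanRoots (S : RootSys V) (A : Set V) : Set V :=
  {γ ∈ (S.Φ : Set V) | ∃ (t : Finset V) (c : V → ℚ),
    (t : Set V) ⊆ A ∧ γ = ∑ α ∈ t, (c α : ℝ) • α}

/-- `Φ_{β,0}`, the irreducible component of `Φ` containing `β`. -/
def component (S : RootSys V) (β : V) : Set V :=
  {γ ∈ (S.Φ : Set V) |
    Relation.ReflTransGen
      (fun x y => x ∈ (S.Φ : Set V) ∧ y ∈ (S.Φ : Set V) ∧ ⟪x, y⟫ ≠ 0) β γ}

/-- `λ|_{Φ'}`: the unique element of `ℂΦ'` with `⟨λ|_{Φ'}, α^∨⟩ = ⟨λ, α^∨⟩`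
for all `α ∈ Φ'`. -/
def restrictW (Φ' : Set V) (l : HStar V) : HStar V :=
  letI : Nonempty (HStar V) := ⟨0⟩
  Classical.epsilon fun m =>
    m ∈ Submodule.span ℂ (emb '' Φ') ∧ ∀ α ∈ Φ', m (coroot α) = l (coroot α)

/-- `ᴵWᴶ = {w ∈ W : ℓ(uwv) = ℓ(u) + ℓ(w) + ℓ(v) for all u ∈ W_I, v ∈ W_J}`. -/
def doubleCoset (S : RootSys V) (I J : Finset V) : Set (V ≃ₗ[ℝ] V) :=
  {w | w ∈ weyl (S.Φ : Set V) ∧ ∀ u ∈ weyl (PhiI S I), ∀ v ∈ weyl (PhiI S J),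
    len S (u * w * v) = len S u + len S w + len S v}

/-- The fundamental weight `ϖ_j` relative to an enumeration `e` of the simple roots:
the unique element of `h*` with `⟨ϖ_j, α_k^∨⟩ = δ_{jk}`. -/
def fundWeight {n : ℕ} (e : Fin n → V) (j : Fin n) : HStar V :=
  letI : Nonempty (HStar V) := ⟨0⟩
  Classical.epsilon fun m => ∀ k : Fin n, m (coroot (e k)) = if k = j then 1 else 0

/-- The labels of the irreducible Dynkin types. -/
inductive LieType | A | B | C | D | E | F | G
deriving DecidableEq

/-- The Cartan matrix of type `A_n` (1-based indices): entry `(i,j)` is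
`⟨α_i, α_j^∨⟩`. -/
def cartanA (i j : ℕ) : ℤ :=
  if i = j then 2 else if i + 1 = j ∨ j + 1 = i then -1 else 0

/-- The Cartan matrices of the irreducible types in the standard (Bourbaki/Humphreys)
numbering of the Dynkin diagram: `cartanEntry t n i j = ⟨α_i, α_j^∨⟩` (1-based). -/
def cartanEntry : LieType → ℕ → ℕ → ℕ → ℤ
  | .A, _, i, j => cartanA i j
  | .B, n, i, j => if i + 1 = n ∧ j = n then -2 else cartanA i j
  | .C, n, i, j => if i = n ∧ j + 1 = n then -2 else cartanA i j
  | .D, n, i, j =>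
      if i = j then 2
      else if (i + 2 = n ∧ j = n) ∨ (i = n ∧ j + 2 = n) then -1
      else if (i + 1 = n ∧ j = n) ∨ (i = n ∧ j + 1 = n) then 0
      else cartanA i j
  | .E, _, i, j =>
      if i = j then 2
      else if (i = 1 ∧ j = 3) ∨ (i = 3 ∧ j = 1) ∨ (i = 2 ∧ j = 4) ∨ (i = 4 ∧ j = 2) then -1
      else if (i = 1 ∧ j = 2) ∨ (i = 2 ∧ j = 1) ∨ (i = 2 ∧ j = 3) ∨ (i = 3 ∧ j = 2) then 0
      else cartanA i j
  | .F, _, i, j => if i = 2 ∧ j = 3 then -2 else cartanA i j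
  | .G, _, i, j => if i = 2 ∧ j = 1 then -3 else cartanA i j

/-- The standard basis vector `e_k` (1-based index, junk `0` outside `1 ≤ k ≤ n`). -/
def stdE (n k : ℕ) : EuclideanSpace ℝ (Fin n) :=
  if h : 1 ≤ k ∧ k ≤ n then EuclideanSpace.single ⟨k - 1, by omega⟩ 1 else 0

/-- The labels `B`, `C`, `D` of the classical non-`A` types. -/
inductive BCD | B | C | D
deriving DecidableEq

/-- The root set of `B_n` / `C_n` / `D_n` in the standard realization. -/
def bcdRoots (t : BCD) (n : ℕ) : Set (EuclideanSpace ℝ (Fin n)) :=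
  {v | (∃ i j : ℕ, 1 ≤ i ∧ i < j ∧ j ≤ n ∧
          (v = stdE n i - stdE n j ∨ v = -(stdE n i - stdE n j) ∨
           v = stdE n i + stdE n j ∨ v = -(stdE n i + stdE n j))) ∨
       (match t with
        | .B => ∃ i : ℕ, 1 ≤ i ∧ i ≤ n ∧ (v = stdE n i ∨ v = -stdE n i)
        | .C => ∃ i : ℕ, 1 ≤ i ∧ i ≤ n ∧ (v = (2:ℝ) • stdE n i ∨ v = -((2:ℝ) • stdE n i))
        | .D => False)}

/-- The positive roots of `B_n` / `C_n` / `D_n` in the standard realization. -/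
def bcdPos (t : BCD) (n : ℕ) : Set (EuclideanSpace ℝ (Fin n)) :=
  {v | (∃ i j : ℕ, 1 ≤ i ∧ i < j ∧ j ≤ n ∧
          (v = stdE n i - stdE n j ∨ v = stdE n i + stdE n j)) ∨
       (match t with
        | .B => ∃ i : ℕ, 1 ≤ i ∧ i ≤ n ∧ v = stdE n i
        | .C => ∃ i : ℕ, 1 ≤ i ∧ i ≤ n ∧ v = (2:ℝ) • stdE n i
        | .D => False)}

/-- The simple roots of `B_n` / `C_n` / `D_n` in the standard realization. -/
def bcdSimple (t : BCD) (n : ℕ) : Set (EuclideanSpace ℝ (Fin n)) :=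
  {v | (∃ i : ℕ, 1 ≤ i ∧ i < n ∧ v = stdE n i - stdE n (i + 1)) ∨
       (match t with
        | .B => v = stdE n n
        | .C => v = (2:ℝ) • stdE n n
        | .D => v = stdE n (n - 1) + stdE n n)}

/-- The simple root `α_k` of `B_n` / `C_n` / `D_n` (1-based index `k`). -/
def bcdAlpha (t : BCD) (n k : ℕ) : EuclideanSpace ℝ (Fin n) :=
  if k < n then stdE n k - stdE n (k + 1)
  else match t with
  | .B => stdE n n
  | .C => (2:ℝ) • stdE n n
  | .D => stdE n (n - 1) + stdE n n


set_option linter.unusedSectionVars false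

/-! ### Reflections and reflection groups -/

lemma aux_reflV_apply (α v : V) : reflV α v = v - ⟪v, coroot α⟫ • α := by
  unfold reflV
  split_ifs with h
  · have : α = 0 := inner_self_eq_zero.mp h
    simp [this]
  · rw [Module.reflection_apply]; rfl

lemma aux_inner_coroot (α v : V) : ⟪v, coroot α⟫ = 2 / ⟪α, α⟫ * ⟪v, α⟫ := by
  simp [coroot, real_inner_smul_right]

lemma aux_coroot_self {α : V} (h : α ≠ 0) : ⟪α, coroot α⟫ = 2 := by
  rw [aux_inner_coroot]
  have : ⟪α, α⟫ ≠ 0 := by simpa using h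
  field_simp

lemma aux_reflV_self {α : V} (h : α ≠ 0) : reflV α α = -α := by
  rw [aux_reflV_apply, aux_coroot_self h, two_smul]; abel

lemma aux_reflV_invol (α v : V) : reflV α (reflV α v) = v := by
  by_cases h : α = 0
  · simp [aux_reflV_apply, h]
  · rw [aux_reflV_apply α v, map_sub, map_smul, aux_reflV_self h, aux_reflV_apply]
    simp

lemma aux_reflV_mul_self (α : V) : reflV α * reflV α = 1 := by
  ext v; exact aux_reflV_invol α v

lemma aux_reflV_inv (α : V) : (reflV α)⁻¹ = reflV α :=
  inv_eq_of_mul_eq_one_left (aux_reflV_mul_self α)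

lemma aux_reflV_inner (α u v : V) : ⟪reflV α u, reflV α v⟫ = ⟪u, v⟫ := by
  by_cases h : α = 0
  · simp [aux_reflV_apply, h]
  have h' : ⟪α, α⟫ ≠ 0 := by simpa using h
  rw [aux_reflV_apply, aux_reflV_apply, aux_inner_coroot, aux_inner_coroot]
  simp only [inner_sub_left, inner_sub_right, real_inner_smul_left, real_inner_smul_right]
  rw [real_inner_comm v α]
  field_simp
  ring

lemma aux_reflV_smul (c : ℝ) (hc : c ≠ 0) (α : V) : reflV (c • α) = reflV α := by
  by_cases h : α = 0
  · simp [h]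
  have h' : ⟪α, α⟫ ≠ 0 := by simpa using h
  ext v
  rw [aux_reflV_apply, aux_reflV_apply, aux_inner_coroot, aux_inner_coroot, smul_smul]
  simp only [real_inner_smul_left, real_inner_smul_right]
  congr 2
  field_simp

/-- `w` preserves the inner product. -/
lemma aux_weyl_inner {Ψ : Set V} {w : V ≃ₗ[ℝ] V} (hw : w ∈ weyl Ψ) :
    ∀ u v, ⟪w u, w v⟫ = ⟪u, v⟫ := by
  induction hw using Subgroup.closure_induction with
  | mem x hx =>
    obtain ⟨α, -, rfl⟩ := hx
    exact aux_reflV_inner α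
  | one => intro u v; rfl
  | mul x y _ _ hx hy => intro u v; rw [LinearEquiv.mul_apply, LinearEquiv.mul_apply, hx, hy]
  | inv x _ hx =>
    intro u v
    rw [← hx]
    have e : ∀ u, x (x⁻¹ u) = u := fun u => by rw [← LinearEquiv.mul_apply]; simp
    rw [e, e]

lemma aux_apply_inv (x : V ≃ₗ[ℝ] V) (u : V) : x (x⁻¹ u) = u := by
  rw [← LinearEquiv.mul_apply]; simp

lemma aux_inv_apply (x : V ≃ₗ[ℝ] V) (u : V) : x⁻¹ (x u) = u := by
  rw [← LinearEquiv.mul_apply]; simp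

lemma aux_reflV_conj (α β : V) : reflV (reflV α β) = reflV α * reflV β * reflV α := by
  ext v
  rw [LinearEquiv.mul_apply, LinearEquiv.mul_apply, aux_reflV_apply (reflV α β),
    aux_inner_coroot, aux_reflV_inner, aux_reflV_apply β (reflV α v), map_sub, aux_reflV_invol,
    map_smul, aux_inner_coroot]
  congr 3
  rw [← aux_reflV_inner α v, aux_reflV_invol]

lemma aux_reflV_mem {Ψ : Set V} {α : V} (h : α ∈ Ψ) : reflV α ∈ weyl Ψ :=
  Subgroup.subset_closure ⟨α, h, rfl⟩

lemma aux_weyl_mono {Ψ Ψ' : Set V} (h : Ψ ⊆ Ψ') : weyl Ψ ≤ weyl Ψ' := by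
  apply Subgroup.closure_mono
  rintro _ ⟨α, hα, rfl⟩
  exact ⟨α, h hα, rfl⟩

lemma aux_weyl_stable {Ψ : Set V} (hcl : ∀ α ∈ Ψ, ∀ β ∈ Ψ, reflV α β ∈ Ψ)
    {w : V ≃ₗ[ℝ] V} (hw : w ∈ weyl Ψ) : ∀ β ∈ Ψ, w β ∈ Ψ ∧ w⁻¹ β ∈ Ψ := by
  induction hw using Subgroup.closure_induction with
  | mem x hx =>
    obtain ⟨α, hα, rfl⟩ := hx
    intro β hβ
    rw [aux_reflV_inv]
    exact ⟨hcl _ hα _ hβ, hcl _ hα _ hβ⟩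
  | one => intro u hu; simpa using hu
  | mul x y _ _ hx hy =>
    intro u hu
    rw [mul_inv_rev]
    exact ⟨(hx _ (hy _ hu).1).1, (hy _ (hx _ hu).2).2⟩
  | inv x _ hx => intro u hu; rw [inv_inv]; exact (hx u hu).symm

/-- A positive functional adapted to `x`. -/
lemma aux_exists_functional (Ψ : Set V) (hfin : Ψ.Finite) (h0 : (0 : V) ∉ Ψ) (x : V) :
    ∃ f : V →ₗ[ℝ] ℝ, ∀ α ∈ Ψ, f α ≠ 0 ∧ (0 < f α → 0 ≤ ⟪x, α⟫) := by
  have : Finite Ψ := hfin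
  obtain ⟨q, hq⟩ := Module.exists_dual_forall_apply_ne_zero (K := ℝ) (fun a : Ψ => (a : V))
    (fun a h => h0 (h ▸ a.2))
  have key : ∀ᶠ t : ℝ in Filter.atTop, ∀ α ∈ Ψ,
      (q α + t * ⟪x, α⟫ ≠ 0 ∧ (0 < q α + t * ⟪x, α⟫ → 0 ≤ ⟪x, α⟫)) := by
    rw [Filter.eventually_all_finite hfin]
    intro α hα
    have hqα := hq ⟨α, hα⟩
    simp only at hqα
    rcases lt_trichotomy ⟪x, α⟫ 0 with h | h | h
    · filter_upwards [Filter.eventually_gt_atTop (q α / (-⟪x, α⟫))] with t ht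
      rw [div_lt_iff₀ (by linarith)] at ht
      exact ⟨by intro h'; linarith, by intro h'; linarith⟩
    · simp [h, hqα]
    · filter_upwards [Filter.eventually_gt_atTop (-q α / ⟪x, α⟫)] with t ht
      rw [div_lt_iff₀ h] at ht
      exact ⟨by intro h'; linarith, fun _ => h.le⟩
  obtain ⟨t, ht⟩ := key.exists
  refine ⟨q + t • (innerₛₗ ℝ x), fun α hα => ?_⟩
  simpa using ht α hα

/-- Existence of a simple system for the positive system cut out by `f`. -/
lemma aux_exists_simple (Ψ : Set V) (hfin : Ψ.Finite)
    (hcl : ∀ α ∈ Ψ, ∀ β ∈ Ψ, reflV α β ∈ Ψ) (f : V →ₗ[ℝ] ℝ) (hf : ∀ α ∈ Ψ, f α ≠ 0) :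
    ∃ D : Set V, D ⊆ {α ∈ Ψ | 0 < f α} ∧
      (∀ β ∈ Ψ, 0 < f β → ∃ α ∈ D, 0 < ⟪β, α⟫) ∧
      (∀ α ∈ D, ∀ β ∈ Ψ, 0 < f β → 0 < f (reflV α β) ∨ ∃ b : ℝ, 0 < b ∧ β = b • α) := by
  set P : Set V := {α ∈ Ψ | 0 < f α} with hP
  have hPfin : P.Finite := hfin.subset (fun _ h => h.1)
  have hex : ∃ n : ℕ, ∃ D : Set V, D ⊆ P ∧ P ⊆ Submodule.span NNReal D ∧ D.ncard = n :=
    ⟨_, P, subset_rfl, Submodule.subset_span, rfl⟩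
  obtain ⟨D, hDP, hPD, hn⟩ := Nat.find_spec hex
  have hmin : ∀ α ∈ D, α ∉ Submodule.span NNReal (D \ {α}) := by
    intro α hα hmem
    refine Nat.find_min hex (m := (D \ {α}).ncard) ?_ ⟨D \ {α}, fun _ h => hDP h.1, ?_, rfl⟩
    · rw [← hn]
      exact Set.ncard_sdiff_singleton_lt_of_mem hα (hPfin.subset hDP)
    · refine hPD.trans ?_
      have : Submodule.span NNReal D ≤ Submodule.span NNReal (D \ {α}) := by
        rw [Submodule.span_le]
        intro β hβ
        by_cases h : β = α
        · exact h ▸ hmem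
        · exact Submodule.subset_span ⟨hβ, h⟩
      exact this
  have hnonneg : ∀ E ⊆ P, ∀ z ∈ Submodule.span NNReal E, 0 ≤ f z ∧ (f z = 0 → z = 0) := by
    intro E hE z hz
    induction hz using Submodule.span_induction with
    | mem x hx => exact ⟨(hE hx).2.le, fun h => absurd h (hE hx).2.ne'⟩
    | zero => simp
    | add x y _ _ hx hy =>
      rw [map_add]
      refine ⟨add_nonneg hx.1 hy.1, fun h => ?_⟩
      rw [hx.2 (by linarith [hx.1, hy.1]), hy.2 (by linarith [hx.1, hy.1]), add_zero]
    | smul a x _ hx =>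
      rw [NNReal.smul_def, map_smul, smul_eq_mul]
      refine ⟨mul_nonneg a.2 hx.1, fun h => ?_⟩
      rcases mul_eq_zero.mp h with h | h
      · rw [h, zero_smul]
      · rw [hx.2 h, smul_zero]
  refine ⟨D, hDP, ?_, ?_⟩
  · intro β hβ hfβ
    by_contra hcon
    push Not at hcon
    have : ∀ z ∈ Submodule.span NNReal D, ⟪β, z⟫ ≤ 0 := by
      intro z hz
      induction hz using Submodule.span_induction with
      | mem x hx => exact hcon x hx
      | zero => simp
      | add x y _ _ hx hy => rw [inner_add_right]; linarith
      | smul a x _ hx =>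
        rw [NNReal.smul_def, real_inner_smul_right]
        exact mul_nonpos_of_nonneg_of_nonpos a.2 hx
    have h1 := this β (hPD ⟨hβ, hfβ⟩)
    have : β = 0 := by
      rw [← inner_self_eq_zero (𝕜 := ℝ)]
      exact le_antisymm h1 real_inner_self_nonneg
    rw [this] at hfβ; simp at hfβ
  · intro α hα β hβ hfβ
    by_contra hcon
    push Not at hcon
    obtain ⟨h1, h2⟩ := hcon
    have hδΨ : reflV α β ∈ Ψ := hcl _ (hDP hα).1 _ hβ
    have hneg : f (reflV α β) < 0 := lt_of_le_of_ne h1 (hf _ hδΨ)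
    have hδ : -(reflV α β) ∈ P := by
      refine ⟨?_, by rw [map_neg]; linarith⟩
      rw [← aux_reflV_self]
      · exact hcl _ hδΨ _ hδΨ
      · intro h; rw [h] at hneg; simp at hneg
    have hins : D = insert α (D \ {α}) := by simp [Set.insert_eq_of_mem hα]
    have hdec : ∀ z ∈ P, ∃ a : NNReal, ∃ y ∈ Submodule.span NNReal (D \ {α}),
        z = a • α + y := by
      intro z hz
      have := hPD hz
      rw [hins] at this
      exact Submodule.mem_span_insert.mp this
    obtain ⟨b, y, hy, hby⟩ := hdec β ⟨hβ, hfβ⟩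
    obtain ⟨d, y', hy', hdy⟩ := hdec _ hδ
    set c := ⟪β, coroot α⟫
    have hEq : (c - b - d) • α = y + y' := by
      have e : -(reflV α β) = c • α - β := by rw [aux_reflV_apply]; abel
      rw [e] at hdy
      rw [NNReal.smul_def] at hby hdy
      have : c • α = β + ((d : ℝ) • α + y') := by
        rw [← sub_eq_iff_eq_add']; exact hdy
      rw [sub_smul, sub_smul, this]
      nth_rewrite 1 [hby]
      module
    have hmem : y + y' ∈ Submodule.span NNReal (D \ {α}) := Submodule.add_mem _ hy hy'
    have hsub : D \ {α} ⊆ P := fun _ h => hDP h.1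
    have hfα : 0 < f α := (hDP hα).2
    rcases lt_or_ge 0 (c - b - d) with hc | hc
    · apply hmin α hα
      have e5 : (Real.toNNReal (c - b - d)⁻¹) • (y + y') = α := by
        rw [NNReal.smul_def, ← hEq, Real.coe_toNNReal _ (inv_pos.mpr hc).le,
          inv_smul_smul₀ hc.ne']
      have e6 := Submodule.smul_mem _ (Real.toNNReal (c - b - d)⁻¹) hmem
      rwa [e5] at e6
    · have e1 : f y + f y' = (c - b - d) * f α := by
        rw [← map_add, ← hEq, map_smul, smul_eq_mul]
      have := mul_nonpos_of_nonpos_of_nonneg hc hfα.le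
      have hy0 : y = 0 := (hnonneg _ hsub y hy).2 (by
        linarith [(hnonneg _ hsub y hy).1, (hnonneg _ hsub y' hy').1])
      rw [hy0, add_zero, NNReal.smul_def] at hby
      refine h2 b ?_ hby
      rcases b.2.lt_or_eq with h | h
      · exact h
      · exfalso
        rw [hby] at hfβ
        change 0 = (b : ℝ) at h
        rw [← h] at hfβ; simp at hfβ

/-- The reflection group is generated by simple reflections. -/
lemma aux_weyl_le_simple (Ψ D : Set V) (hfin : Ψ.Finite)
    (hcl : ∀ α ∈ Ψ, ∀ β ∈ Ψ, reflV α β ∈ Ψ) (f : V →ₗ[ℝ] ℝ) (hf : ∀ α ∈ Ψ, f α ≠ 0)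
    (hD : D ⊆ {α ∈ Ψ | 0 < f α})
    (h1 : ∀ β ∈ Ψ, 0 < f β → ∃ α ∈ D, 0 < ⟪β, α⟫)
    (h2 : ∀ α ∈ D, ∀ β ∈ Ψ, 0 < f β → 0 < f (reflV α β) ∨ ∃ b : ℝ, 0 < b ∧ β = b • α) :
    weyl Ψ ≤ weyl D := by
  have key : ∀ n : ℕ, ∀ β ∈ Ψ, 0 < f β → {δ ∈ Ψ | f δ < f β}.ncard = n →
      reflV β ∈ weyl D := by
    intro n
    induction n using Nat.strong_induction_on with
    | _ n ih =>
    intro β hβ hfβ hn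
    obtain ⟨α, hα, hpos⟩ := h1 β hβ hfβ
    rcases h2 α hα β hβ hfβ with h | ⟨b, hb, rfl⟩
    · have hα0 : α ≠ 0 := by rintro rfl; simp at hpos
      have hαα : 0 < ⟪α, α⟫ := real_inner_self_pos.mpr hα0
      have hlt : f (reflV α β) < f β := by
        rw [aux_reflV_apply, map_sub, map_smul, smul_eq_mul, aux_inner_coroot]
        have := (hD hα).2
        have : 0 < 2 / ⟪α, α⟫ * ⟪β, α⟫ * f α := by positivity
        linarith
      have hm : reflV α β ∈ Ψ := hcl _ (hD hα).1 _ hβ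
      have := ih {δ ∈ Ψ | f δ < f (reflV α β)}.ncard (by
        rw [← hn]
        apply Set.ncard_lt_ncard _ (hfin.subset fun _ h => h.1)
        refine ⟨fun δ hδ => ⟨hδ.1, hδ.2.trans hlt⟩, fun hsub => ?_⟩
        exact lt_irrefl _ (hsub ⟨hm, hlt⟩ : reflV α β ∈ {δ ∈ Ψ | f δ < f (reflV α β)}).2)
        _ hm h rfl
      have e : reflV β = reflV α * reflV (reflV α β) * reflV α := by
        rw [← aux_reflV_conj, aux_reflV_invol]
      rw [e]
      exact mul_mem (mul_mem (aux_reflV_mem hα) this) (aux_reflV_mem hα)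
    · rw [aux_reflV_smul b hb.ne']
      exact aux_reflV_mem hα
  refine (Subgroup.closure_le _).mpr ?_
  rintro _ ⟨β, hβ, rfl⟩
  rcases (hf β hβ).lt_or_gt with h | h
  · have hβ0 : β ≠ 0 := by rintro rfl; simp at h
    have hneg : -β ∈ Ψ := by rw [← aux_reflV_self hβ0]; exact hcl _ hβ _ hβ
    have := key _ (-β) hneg (by rw [map_neg]; linarith) rfl
    rw [← neg_one_smul ℝ, aux_reflV_smul _ (by norm_num)] at this
    exact this
  · exact key _ β hβ h rfl

/-- The exchange property. -/
lemma aux_exchange (Ψ D : Set V) (hcl : ∀ α ∈ Ψ, ∀ β ∈ Ψ, reflV α β ∈ Ψ) (f : V →ₗ[ℝ] ℝ)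
    (hD : D ⊆ {α ∈ Ψ | 0 < f α})
    (h2 : ∀ α ∈ D, ∀ β ∈ Ψ, 0 < f β → 0 < f (reflV α β) ∨ ∃ b : ℝ, 0 < b ∧ β = b • α)
    (L : List V) : (∀ a ∈ L, a ∈ D) → ∀ α ∈ Ψ, 0 < f α → f ((L.map reflV).prod⁻¹ α) < 0 →
    ∃ L' : List V, (∀ a ∈ L', a ∈ D) ∧ L'.length + 1 = L.length ∧
      (L'.map reflV).prod = reflV α * (L.map reflV).prod := by
  induction L with
  | nil =>
    intro _ α _ hfα h
    simp at h
    exact absurd h (by linarith)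
  | cons a L ih =>
    intro hL α hα hfα h
    have haD : a ∈ D := hL a (by simp)
    have hL1 : ∀ a ∈ L, a ∈ D := fun b hb => hL b (by simp [hb])
    rw [List.map_cons, List.prod_cons, mul_inv_rev, aux_reflV_inv, LinearEquiv.mul_apply] at h
    rcases h2 a haD α hα hfα with hp | ⟨b, hb, rfl⟩
    · obtain ⟨L', hL', hlen, hprod⟩ := ih hL1 _ (hcl _ (hD haD).1 _ hα) hp h
      refine ⟨a :: L', ?_, by simp [hlen], ?_⟩
      · intro c hc
        rcases List.mem_cons.mp hc with rfl | hc
        · exact haD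
        · exact hL' c hc
      · rw [List.map_cons, List.prod_cons, hprod, aux_reflV_conj, List.map_cons, List.prod_cons]
        simp only [← mul_assoc, aux_reflV_mul_self, one_mul]
    · refine ⟨L, hL1, by simp, ?_⟩
      rw [aux_reflV_smul b hb.ne', List.map_cons, List.prod_cons, ← mul_assoc,
        aux_reflV_mul_self, one_mul]

lemma aux_exists_word {D : Set V} {w : V ≃ₗ[ℝ] V} (hw : w ∈ weyl D) :
    ∃ L : List V, (∀ a ∈ L, a ∈ D) ∧ (L.map reflV).prod = w := by
  induction hw using Subgroup.closure_induction with
  | mem x hx =>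
    obtain ⟨α, hα, rfl⟩ := hx
    exact ⟨[α], by simpa using hα, by simp⟩
  | one => exact ⟨[], by simp, by simp⟩
  | mul x y _ _ hx hy =>
    obtain ⟨L, hL, rfl⟩ := hx
    obtain ⟨M, hM, rfl⟩ := hy
    refine ⟨L ++ M, ?_, by simp⟩
    intro a ha
    rcases List.mem_append.mp ha with h | h
    · exact hL a h
    · exact hM a h
  | inv x _ hx =>
    obtain ⟨L, hL, rfl⟩ := hx
    refine ⟨L.reverse, fun a ha => hL a (by simpa using ha), ?_⟩
    rw [List.prod_inv_reverse, List.map_map, List.map_reverse]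
    congr 3
    funext a
    exact (aux_reflV_inv a).symm

/-- Stabilizers of vectors are generated by reflections. -/
lemma aux_fix_one (Ψ : Set V) (hfin : Ψ.Finite) (h0 : (0 : V) ∉ Ψ)
    (hcl : ∀ α ∈ Ψ, ∀ β ∈ Ψ, reflV α β ∈ Ψ) (x : V) (w : V ≃ₗ[ℝ] V) (hw : w ∈ weyl Ψ)
    (hx : w x = x) : w ∈ weyl {α ∈ Ψ | ⟪x, α⟫ = 0} := by
  obtain ⟨f, hf⟩ := aux_exists_functional Ψ hfin h0 x
  obtain ⟨D, hD, h1, h2⟩ := aux_exists_simple Ψ hfin hcl f (fun α hα => (hf α hα).1)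
  have hle := aux_weyl_le_simple Ψ D hfin hcl f (fun α hα => (hf α hα).1) hD h1 h2
  have hDΨ : D ⊆ Ψ := fun _ h => (hD h).1
  have key : ∀ n : ℕ, ∀ L : List V, L.length = n → (∀ a ∈ L, a ∈ D) →
      (L.map reflV).prod x = x → (L.map reflV).prod ∈ weyl {α ∈ Ψ | ⟪x, α⟫ = 0} := by
    intro n
    induction n using Nat.strong_induction_on with
    | _ n ih =>
    intro L hn hL hLx
    rcases L with _ | ⟨α, L⟩
    · simp
    have hαD : α ∈ D := hL α (by simp)
    have hL1 : ∀ a ∈ L, a ∈ D := fun b hb => hL b (by simp [hb])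
    rw [List.map_cons, List.prod_cons] at hLx ⊢
    simp only [List.length_cons] at hn
    set w' := (L.map reflV).prod with hw'
    have hw'D : w' ∈ weyl Ψ := by
      apply Subgroup.list_prod_mem
      intro y hy
      obtain ⟨a, ha, rfl⟩ := List.mem_map.mp hy
      exact aux_reflV_mem (hDΨ (hL1 a ha))
    have hm : w'⁻¹ α ∈ Ψ := (aux_weyl_stable hcl hw'D α (hDΨ hαD)).2
    rcases (hf _ hm).1.lt_or_gt with h | h
    · obtain ⟨L', hL', hlen, hprod⟩ := aux_exchange Ψ D hcl f hD h2 L hL1 α (hDΨ hαD)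
        (hD hαD).2 h
      rw [← hw'] at hprod
      rw [← hprod]
      exact ih L'.length (by omega) L' rfl hL' (by rw [hprod]; exact hLx)
    · have hα0 : α ≠ 0 := fun h => h0 (h ▸ hDΨ hαD)
      have e1 : ⟪x, α⟫ = - ⟪x, w'⁻¹ α⟫ := by
        have hin := aux_weyl_inner (mul_mem (aux_reflV_mem (hDΨ hαD)) hw'D) x (w'⁻¹ α)
        rw [hLx, LinearEquiv.mul_apply, aux_apply_inv, aux_reflV_self hα0, inner_neg_right] at hin
        linarith
      have e2 := (hf _ hm).2 h
      have e3 := (hf _ (hDΨ hαD)).2 (hD hαD).2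
      have e4 : ⟪x, α⟫ = 0 := by linarith
      have hfx : w' x = x := by
        rw [LinearEquiv.mul_apply] at hLx
        have := congrArg (reflV α) hLx
        rw [aux_reflV_invol] at this
        rw [this, aux_reflV_apply, aux_inner_coroot, e4]
        simp
      exact mul_mem (aux_reflV_mem ⟨hDΨ hαD, e4⟩) (ih L.length (by omega) L rfl hL1 hfx)
  obtain ⟨L, hL, rfl⟩ := aux_exists_word (hle hw)
  exact key _ L rfl hL hx

lemma aux_fix_set (F : Set V) (n : ℕ) : ∀ (Ψ : Set V), Ψ.ncard = n → Ψ.Finite → (0 : V) ∉ Ψ →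
    (∀ α ∈ Ψ, ∀ β ∈ Ψ, reflV α β ∈ Ψ) → ∀ (w : V ≃ₗ[ℝ] V), w ∈ weyl Ψ →
    (∀ x ∈ F, w x = x) → w ∈ weyl {α ∈ Ψ | ∀ x ∈ F, ⟪x, α⟫ = 0} := by
  induction n using Nat.strong_induction_on with
  | _ n ih =>
  intro Ψ hn hfin h0 hcl w hw hF
  by_cases hall : ∀ α ∈ Ψ, ∀ x ∈ F, ⟪x, α⟫ = 0
  · refine aux_weyl_mono ?_ hw
    exact fun α hα => ⟨hα, hall α hα⟩
  · push Not at hall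
    obtain ⟨α, hα, x, hx, hne⟩ := hall
    have hsub : {α ∈ Ψ | ⟪x, α⟫ = 0} ⊆ Ψ := fun _ h => h.1
    have := ih {α ∈ Ψ | ⟪x, α⟫ = 0}.ncard (by
      rw [← hn]
      exact Set.ncard_lt_ncard ⟨hsub, fun h => hne (h hα).2⟩ hfin) _ rfl (hfin.subset hsub)
      (fun h => h0 h.1) (by
        rintro a ⟨ha, hxa⟩ b ⟨hb, hxb⟩
        refine ⟨hcl a ha b hb, ?_⟩
        rw [aux_reflV_apply, inner_sub_right, real_inner_smul_right, hxa, hxb]; simp)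
      w (aux_fix_one Ψ hfin h0 hcl x w hw (hF x hx)) hF
    refine aux_weyl_mono ?_ this
    exact fun a ha => ⟨ha.1.1, ha.2⟩

/-! ### The action on complex weights -/

lemma aux_emb_decomp (l : HStar V) :
    ∃ a b : V, ∀ v, l v = (⟪a, v⟫ : ℂ) + (⟪b, v⟫ : ℂ) * Complex.I := by
  let r : V →ₗ[ℝ] ℝ := Complex.reLm ∘ₗ l
  let i : V →ₗ[ℝ] ℝ := Complex.imLm ∘ₗ l
  refine ⟨(InnerProductSpace.toDual ℝ V).symm (LinearMap.toContinuousLinearMap r),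
    (InnerProductSpace.toDual ℝ V).symm (LinearMap.toContinuousLinearMap i), fun v => ?_⟩
  rw [InnerProductSpace.toDual_symm_apply, InnerProductSpace.toDual_symm_apply]
  exact (Complex.re_add_im (l v)).symm

lemma aux_wAct_apply (w : V ≃ₗ[ℝ] V) (l : HStar V) (v : V) : wAct w l v = l (w⁻¹ v) := rfl

lemma aux_wAct_mul (w w' : V ≃ₗ[ℝ] V) (l : HStar V) :
    wAct (w * w') l = wAct w (wAct w' l) := by
  ext v
  rw [aux_wAct_apply, aux_wAct_apply, aux_wAct_apply, mul_inv_rev, LinearEquiv.mul_apply]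

lemma aux_wAct_one (l : HStar V) : wAct 1 l = l := by
  ext v; rw [aux_wAct_apply]; simp

lemma aux_sRefl (γ : V) (l : HStar V) : sRefl γ l = wAct (reflV γ) l := by
  ext v
  rw [aux_wAct_apply, aux_reflV_inv, aux_reflV_apply, map_sub, map_smul, aux_inner_coroot]
  simp only [sRefl, coroot, emb, map_smul, LinearMap.sub_apply, LinearMap.smul_apply,
    LinearMap.coe_mk, AddHom.coe_mk, smul_eq_mul, Complex.real_smul]
  rw [real_inner_comm v γ]
  push_cast
  ring

lemma aux_stab (Ψ : Set V) (hfin : Ψ.Finite) (h0 : (0 : V) ∉ Ψ)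
    (hcl : ∀ α ∈ Ψ, ∀ β ∈ Ψ, reflV α β ∈ Ψ) (l : HStar V) (w : V ≃ₗ[ℝ] V) (hw : w ∈ weyl Ψ)
    (hl : wAct w l = l) : w ∈ weyl {α ∈ Ψ | l α = 0} := by
  obtain ⟨a, b, hab⟩ := aux_emb_decomp l
  have hv : ∀ v, l (w v) = l v := by
    intro v
    have := congrArg (fun m : HStar V => m (w v)) hl
    simp only [aux_wAct_apply, aux_inv_apply] at this
    exact this.symm
  have hre : ∀ v, ⟪a, w v⟫ = ⟪a, v⟫ := by
    intro v
    have := congrArg Complex.re (hv v)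
    rw [hab, hab] at this
    simpa using this
  have him : ∀ v, ⟪b, w v⟫ = ⟪b, v⟫ := by
    intro v
    have := congrArg Complex.im (hv v)
    rw [hab, hab] at this
    simpa using this
  have hfix : ∀ a : V, (∀ v, ⟪a, w v⟫ = ⟪a, v⟫) → w a = a := by
    intro a ha
    apply ext_inner_right ℝ
    intro v
    have h1 := aux_weyl_inner hw a (w⁻¹ v)
    rw [aux_apply_inv] at h1
    rw [h1, ← ha, aux_apply_inv]
  have := aux_fix_set {a, b} _ Ψ rfl hfin h0 hcl w hw (by
    rintro x (rfl | rfl)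
    · exact hfix _ hre
    · exact hfix _ him)
  refine aux_weyl_mono ?_ this
  rintro α ⟨hα, h⟩
  refine ⟨hα, ?_⟩
  rw [hab, h a (by simp), h b (by simp)]
  simp

lemma aux_weyl_empty {w : V ≃ₗ[ℝ] V} {Ψ : Set V} (hΨ : Ψ = ∅) (hw : w ∈ weyl Ψ) : w = 1 := by
  subst hΨ
  simpa [weyl] using hw

lemma aux_sgnW_eq (S : RootSys V) (Ψ : Set V) (hfin : Ψ.Finite) (h0 : (0 : V) ∉ Ψ)
    (hcl : ∀ α ∈ Ψ, ∀ β ∈ Ψ, reflV α β ∈ Ψ) (l m : HStar V) (hl : IsRegularOn Ψ l)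
    (hm : IsRegularOn Ψ m) (w : V ≃ₗ[ℝ] V) (hw : w ∈ weyl Ψ) (h : m = wAct w l) :
    sgnW S Ψ l m = (-1) ^ len S w := by
  have hc : IsRegularOn Ψ l ∧ IsRegularOn Ψ m ∧ ∃ w, w ∈ weyl Ψ ∧ m = wAct w l :=
    ⟨hl, hm, w, hw, h⟩
  unfold sgnW
  rw [dif_pos hc]
  obtain ⟨hw2, h2⟩ := hc.2.2.choose_spec
  set w2 := hc.2.2.choose
  have : w⁻¹ * w2 = 1 := by
    apply aux_weyl_empty (Ψ := {α ∈ Ψ | l α = 0})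
    · ext α
      simp only [Set.mem_setOf_eq, Set.mem_empty_iff_false, iff_false, not_and]
      exact hl α
    · apply aux_stab Ψ hfin h0 hcl l _ (mul_mem (inv_mem hw) hw2)
      rw [aux_wAct_mul, ← h2, h, ← aux_wAct_mul, inv_mul_cancel, aux_wAct_one]
  rw [inv_mul_eq_one.mp this]

/-! ### Subsystems -/

lemma aux_rat_span (S : RootSys V) (A : Set V) (hA : A ⊆ (S.Φ : Set V)) :
    ratSpanRoots S A = {γ ∈ (S.Φ : Set V) | γ ∈ Submodule.span ℝ A} := by
  ext γ
  constructor
  · rintro ⟨h, t, c, ht, rfl⟩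
    refine ⟨h, Submodule.sum_mem _ fun a ha => Submodule.smul_mem _ _ ?_⟩
    exact Submodule.subset_span (ht ha)
  · rintro ⟨h, hs⟩
    refine ⟨h, ?_⟩
    obtain ⟨c, t, ht, -, hc⟩ := Submodule.mem_span_iff_exists_finset_subset.mp hs
    obtain ⟨π, hπ⟩ := LinearMap.exists_leftInverse_of_injective (Algebra.linearMap ℚ ℝ)
      (LinearMap.ker_eq_bot.mpr (algebraMap ℚ ℝ).injective)
    have hπq : ∀ n : ℤ, π (n : ℝ) = n := by
      intro n
      have := LinearMap.congr_fun hπ (n : ℚ)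
      simpa using this
    have hπmul : ∀ (r : ℝ) (n : ℤ), π (r * n) = π r * n := by
      intro r n
      have : r * (n : ℝ) = (n : ℚ) • r := by
        rw [Rat.smul_def]; push_cast; ring
      rw [this, map_smul, smul_eq_mul, mul_comm]
    refine ⟨t, fun a => π (c a), ht, ?_⟩
    -- both sides have the same pairing with all coroots
    have hz : ∀ δ ∈ S.Φ, ⟪γ - ∑ a ∈ t, ((π (c a) : ℚ) : ℝ) • a, δ⟫ = 0 := by
      intro δ hδ
      have hintg : ∀ a ∈ S.Φ, ∃ n : ℤ, ⟪a, coroot δ⟫ = (n : ℝ) :=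
        fun a ha => S.crystallographic δ hδ a ha
      choose! N hN using hintg
      have e1 : ((N γ : ℤ) : ℝ) = ∑ a ∈ t, c a * (N a : ℝ) := by
        rw [← hN γ h, ← hc, sum_inner]
        refine Finset.sum_congr rfl fun a ha => ?_
        rw [real_inner_smul_left, hN a (hA (ht ha))]
      have e2 : ((N γ : ℤ) : ℚ) = ∑ a ∈ t, π (c a) * (N a : ℚ) := by
        rw [← hπq, e1, map_sum]
        exact Finset.sum_congr rfl fun a _ => hπmul _ _
      have e3 : ⟪γ - ∑ a ∈ t, ((π (c a) : ℚ) : ℝ) • a, coroot δ⟫ = 0 := by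
        rw [inner_sub_left, sum_inner, hN γ h, sub_eq_zero]
        have e4 : ((N γ : ℤ) : ℝ) = ∑ a ∈ t, ((π (c a) : ℚ) : ℝ) * (N a : ℝ) := by
          exact_mod_cast e2
        rw [e4]
        refine Finset.sum_congr rfl fun a ha => ?_
        rw [real_inner_smul_left, hN a (hA (ht ha))]
      rw [aux_inner_coroot] at e3
      have hδ0 : (2 / ⟪δ, δ⟫ : ℝ) ≠ 0 :=
        div_ne_zero two_ne_zero (by simpa using S.ne_zero δ hδ)
      exact (mul_eq_zero.mp e3).resolve_left hδ0
    rw [← sub_eq_zero]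
    apply ext_inner_right ℝ
    intro v
    rw [inner_zero_left]
    have hv : v ∈ Submodule.span ℝ (S.Φ : Set V) := by rw [S.span_eq_top]; trivial
    induction hv using Submodule.span_induction with
    | mem x hx => exact hz x hx
    | zero => simp
    | add x y _ _ hx hy => rw [inner_add_right, hx, hy, add_zero]
    | smul r x _ hx => rw [real_inner_smul_right, hx, mul_zero]

lemma aux_ratSpan_closed (S : RootSys V) (A : Set V) (hA : A ⊆ (S.Φ : Set V)) :
    ∀ α ∈ ratSpanRoots S A, ∀ β ∈ ratSpanRoots S A, reflV α β ∈ ratSpanRoots S A := by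
  rw [aux_rat_span S A hA]
  rintro α ⟨hα, hα'⟩ β ⟨hβ, hβ'⟩
  refine ⟨S.refl_mem α hα β hβ, ?_⟩
  rw [aux_reflV_apply]
  exact Submodule.sub_mem _ hβ' (Submodule.smul_mem _ _ hα')

lemma aux_PhiI_closed (S : RootSys V) (I : Finset V) :
    ∀ α ∈ PhiI S I, ∀ β ∈ PhiI S I, reflV α β ∈ PhiI S I := by
  rintro α ⟨hα, hα'⟩ β ⟨hβ, hβ'⟩
  refine ⟨S.refl_mem α hα β hβ, ?_⟩
  obtain ⟨n, hn⟩ := S.crystallographic α hα β hβ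
  rw [aux_reflV_apply, hn, Int.cast_smul_eq_zsmul]
  exact Submodule.sub_mem _ hβ' (Submodule.smul_mem _ _ hα')

lemma aux_restrict_spec (Φ' : Set V) (l : HStar V) :
    ∀ α ∈ Φ', (restrictW Φ' l) (coroot α) = l (coroot α) := by
  have hex : ∃ m : HStar V,
      m ∈ Submodule.span ℂ (emb '' Φ') ∧ ∀ α ∈ Φ', m (coroot α) = l (coroot α) := by
    obtain ⟨a, b, hab⟩ := aux_emb_decomp l
    let U := Submodule.span ℝ Φ'
    have hemb : ∀ u ∈ U, emb u ∈ Submodule.span ℂ (emb '' Φ') := by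
      intro u hu
      induction hu using Submodule.span_induction with
      | mem x hx => exact Submodule.subset_span ⟨x, hx, rfl⟩
      | zero =>
        have : emb (0 : V) = 0 := by ext v; simp [emb]
        rw [this]; exact Submodule.zero_mem _
      | add x y _ _ hx hy =>
        have : emb (x + y) = emb x + emb y := by ext v; simp [emb, inner_add_left]
        rw [this]; exact Submodule.add_mem _ hx hy
      | smul c x _ hx =>
        have : emb (c • x) = (c : ℂ) • emb x := by
          ext v; simp [emb, real_inner_smul_left]
        rw [this]; exact Submodule.smul_mem _ _ hx
    refine ⟨emb (U.starProjection a) + Complex.I • emb (U.starProjection b), ?_, ?_⟩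
    · exact Submodule.add_mem _ (hemb _ (Submodule.starProjection_apply_mem _ _))
        (Submodule.smul_mem _ _ (hemb _ (Submodule.starProjection_apply_mem _ _)))
    · intro α hα
      have hαU : coroot α ∈ U := Submodule.smul_mem _ _ (Submodule.subset_span hα)
      have hp : ∀ a, ⟪U.starProjection a, coroot α⟫ = ⟪a, coroot α⟫ := by
        intro a
        rw [Submodule.inner_starProjection_left_eq_right,
          Submodule.starProjection_eq_self_iff.mpr hαU]
      rw [hab]
      simp only [emb, LinearMap.add_apply, LinearMap.smul_apply, LinearMap.coe_mk,
        AddHom.coe_mk, smul_eq_mul, hp]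
      ring
  letI : Nonempty (HStar V) := ⟨0⟩
  exact (Classical.epsilon_spec hex).2

lemma aux_wAct_fix {Φ' : Set V} (d : HStar V) (hd : ∀ α ∈ Φ', d α = 0) {w : V ≃ₗ[ℝ] V}
    (hw : w ∈ weyl Φ') : wAct w d = d := by
  induction hw using Subgroup.closure_induction with
  | mem x hx =>
    obtain ⟨α, hα, rfl⟩ := hx
    ext v
    rw [aux_wAct_apply, aux_reflV_inv, aux_reflV_apply, map_sub, map_smul, hd α hα]
    simp
  | one => exact aux_wAct_one d
  | mul x y _ _ hx hy => rw [aux_wAct_mul, hy, hx]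
  | inv x _ hx =>
    nth_rewrite 1 [← hx]
    rw [← aux_wAct_mul, inv_mul_cancel, aux_wAct_one]

lemma aux_weyl_fix {Φ' : Set V} (x : V) (hx : ∀ α ∈ Φ', ⟪x, α⟫ = 0) {w : V ≃ₗ[ℝ] V}
    (hw : w ∈ weyl Φ') : w x = x := by
  induction hw using Subgroup.closure_induction with
  | mem y hy =>
    obtain ⟨α, hα, rfl⟩ := hy
    rw [aux_reflV_apply, aux_inner_coroot, hx α hα]
    simp
  | one => rfl
  | mul y z _ _ hy hz => rw [LinearEquiv.mul_apply, hz, hy]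
  | inv y _ hy =>
    nth_rewrite 1 [← hy]
    rw [aux_inv_apply]

lemma aux_wAct_add (w : V ≃ₗ[ℝ] V) (l m : HStar V) : wAct w (l + m) = wAct w l + wAct w m := by
  ext v; rfl

lemma aux_weyl_inter (S : RootSys V) (I : Finset V) (A : Set V) (hA : A ⊆ (S.Φ : Set V))
    (w : V ≃ₗ[ℝ] V) (h1 : w ∈ weyl (PhiI S I)) (h2 : w ∈ weyl (ratSpanRoots S A)) :
    w ∈ weyl (PhiI S I ∩ ratSpanRoots S A) := by
  have := aux_fix_set {x : V | ∀ α ∈ ratSpanRoots S A, ⟪x, α⟫ = 0} _ (PhiI S I) rfl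
    (S.Φ.finite_toSet.subset fun _ h => h.1) (fun h => S.ne_zero 0 h.1 rfl)
    (aux_PhiI_closed S I) w h1 (fun x hx => aux_weyl_fix x hx h2)
  refine aux_weyl_mono ?_ this
  rintro α ⟨hα, h⟩
  refine ⟨hα, ?_⟩
  rw [aux_rat_span S A hA]
  refine ⟨hα.1, ?_⟩
  rw [← Submodule.orthogonal_orthogonal (Submodule.span ℝ A), Submodule.mem_orthogonal]
  intro x hx
  apply h
  intro δ hδ
  rw [aux_rat_span S A hA] at hδ
  rw [real_inner_comm]
  exact (Submodule.mem_orthogonal _ _).mp hx δ hδ.2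

/-- Lemma 4.15: let `λ ∈ Λ_I⁺`, `β ∈ Φ \ Φ_λ` and `γ, ν ∈ Φ_{β,2}`.  Then
`sgn(s_γ λ, s_ν λ) = sgn(s_γ (λ|_{Φ_{β,2}}), s_ν (λ|_{Φ_{β,2}}), Φ_I ∩ Φ_{β,2}, Φ_{β,2})`. -/
theorem statement_14 {V : Type*} [NormedAddCommGroup V] [InnerProductSpace ℝ V]
    [FiniteDimensional ℝ V]
    (S : RootSys V) (I : Finset V) (hI : I ⊆ S.Δ)
    (lam : HStar V) (hlam : lam ∈ LambdaP (I : Set V))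
    (β : V) (hβΦ : β ∈ (S.Φ : Set V)) (hβ : β ∉ singSet S lam)
    (γ ν : V) (hγ : γ ∈ ratSpanRoots S (singSet S lam ∪ {β}))
    (hν : ν ∈ ratSpanRoots S (singSet S lam ∪ {β})) :
    sgnW S (PhiI S I) (sRefl γ lam) (sRefl ν lam) =
      sgnW S (PhiI S I ∩ ratSpanRoots S (singSet S lam ∪ {β}))
        (sRefl γ (restrictW (ratSpanRoots S (singSet S lam ∪ {β})) lam))
        (sRefl ν (restrictW (ratSpanRoots S (singSet S lam ∪ {β})) lam)) := by
  set A : Set V := singSet S lam ∪ {β} with hAdef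
  have hA : A ⊆ (S.Φ : Set V) := by
    rintro a (ha | rfl)
    · exact ha.1
    · exact hβΦ
  set Φ2 := ratSpanRoots S A with hΦ2
  have hΦ2Φ : Φ2 ⊆ (S.Φ : Set V) := fun _ h => h.1
  have hcl2 : ∀ α ∈ Φ2, ∀ β ∈ Φ2, reflV α β ∈ Φ2 := aux_ratSpan_closed S A hA
  have hsing : singSet S lam ⊆ Φ2 := by
    intro a ha
    rw [hΦ2, aux_rat_span S A hA]
    exact ⟨ha.1, Submodule.subset_span (Or.inl ha)⟩
  have hclI := aux_PhiI_closed S I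
  set m := restrictW Φ2 lam with hm
  have hmΦ : ∀ α ∈ Φ2, m α = lam α := by
    intro α hα
    have h := aux_restrict_spec Φ2 lam α hα
    have hα0 : α ≠ 0 := S.ne_zero α hα.1
    have hαα : (2 / ⟪α, α⟫ : ℝ) ≠ 0 := div_ne_zero two_ne_zero (by simpa using hα0)
    rw [coroot, map_smul, map_smul] at h
    exact smul_right_injective _ hαα h
  set d := lam - m with hd
  have hd0 : ∀ α ∈ Φ2, d α = 0 := fun α hα => by
    rw [hd, LinearMap.sub_apply, hmΦ α hα, sub_self]
  have hlm : lam = m + d := by rw [hd]; abel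
  have hdec : ∀ w ∈ weyl Φ2, wAct w lam = wAct w m + d := by
    intro w hw
    nth_rewrite 1 [hlm]
    rw [aux_wAct_add, aux_wAct_fix d hd0 hw]
  -- regularity
  have hreg : ∀ δ ∈ Φ2, (IsRegularOn (PhiI S I) (wAct (reflV δ) lam) ↔
      IsRegularOn (PhiI S I ∩ Φ2) (wAct (reflV δ) m)) := by
    intro δ hδ
    have hval : ∀ α ∈ Φ2, wAct (reflV δ) m α = wAct (reflV δ) lam α := by
      intro α hα
      rw [aux_wAct_apply, aux_wAct_apply, aux_reflV_inv, hmΦ _ (hcl2 _ hδ _ hα)]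
    constructor
    · intro h α hα
      rw [hval α hα.2]
      exact h α hα.1
    · intro h α hα h0
      have hmem : α ∈ Φ2 := by
        rw [aux_wAct_apply, aux_reflV_inv] at h0
        have := hcl2 _ hδ _ (hsing ⟨S.refl_mem δ hδ.1 α hα.1, h0⟩)
        rwa [aux_reflV_invol] at this
      exact h α ⟨hα, hmem⟩ (by rw [hval α hmem]; exact h0)
  rw [aux_sRefl, aux_sRefl, aux_sRefl, aux_sRefl]
  have hγW := aux_reflV_mem hγ
  have hνW := aux_reflV_mem hν
  -- the key equivalence
  have hiff : ∀ w, (w ∈ weyl (PhiI S I) ∧ wAct (reflV ν) lam = wAct w (wAct (reflV γ) lam)) ↔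
      (w ∈ weyl (PhiI S I ∩ Φ2) ∧ wAct (reflV ν) m = wAct w (wAct (reflV γ) m)) := by
    intro w
    have hE : w ∈ weyl Φ2 → (wAct (reflV ν) lam = wAct w (wAct (reflV γ) lam) ↔
        wAct (reflV ν) m = wAct w (wAct (reflV γ) m)) := by
      intro hw
      rw [← aux_wAct_mul, ← aux_wAct_mul, hdec _ hνW, hdec _ (mul_mem hw hγW), add_left_inj]
    constructor
    · rintro ⟨hw, h⟩
      have hg : (reflV ν)⁻¹ * w * reflV γ ∈ weyl {α ∈ (S.Φ : Set V) | lam α = 0} := by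
        apply aux_stab _ S.Φ.finite_toSet (fun h => S.ne_zero 0 h rfl) S.refl_mem
        · exact mul_mem (mul_mem (inv_mem (aux_reflV_mem hν.1))
            (aux_weyl_mono (fun _ h => h.1) hw)) (aux_reflV_mem hγ.1)
        · rw [mul_assoc, aux_wAct_mul, aux_wAct_mul, ← h, ← aux_wAct_mul, inv_mul_cancel,
            aux_wAct_one]
      have hg2 := aux_weyl_mono hsing hg
      have hw2 : w ∈ weyl Φ2 := by
        have e : w = reflV ν * ((reflV ν)⁻¹ * w * reflV γ) * (reflV γ)⁻¹ := by group
        rw [e]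
        exact mul_mem (mul_mem hνW hg2) (inv_mem hγW)
      exact ⟨aux_weyl_inter S I A hA w hw hw2, (hE hw2).mp h⟩
    · rintro ⟨hw, h⟩
      exact ⟨aux_weyl_mono Set.inter_subset_left hw,
        (hE (aux_weyl_mono Set.inter_subset_right hw)).mpr h⟩
  have hfinI : (PhiI S I).Finite := S.Φ.finite_toSet.subset fun _ h => h.1
  have h0I : (0 : V) ∉ PhiI S I := fun h => S.ne_zero 0 h.1 rfl
  by_cases hc : IsRegularOn (PhiI S I) (wAct (reflV γ) lam) ∧
      IsRegularOn (PhiI S I) (wAct (reflV ν) lam) ∧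
      ∃ w, w ∈ weyl (PhiI S I) ∧ wAct (reflV ν) lam = wAct w (wAct (reflV γ) lam)
  · obtain ⟨hr1, hr2, w, hw⟩ := hc
    have hw' := (hiff w).mp hw
    rw [aux_sgnW_eq S (PhiI S I) hfinI h0I hclI _ _ hr1 hr2 w hw.1 hw.2,
      aux_sgnW_eq S (PhiI S I ∩ Φ2) (hfinI.subset Set.inter_subset_left) (fun h => h0I h.1)
        (fun α hα β hβ => ⟨hclI _ hα.1 _ hβ.1, hcl2 _ hα.2 _ hβ.2⟩) _ _ ((hreg γ hγ).mp hr1)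
        ((hreg ν hν).mp hr2) w hw'.1 hw'.2]
  · have hc' : ¬ (IsRegularOn (PhiI S I ∩ Φ2) (wAct (reflV γ) m) ∧
      IsRegularOn (PhiI S I ∩ Φ2) (wAct (reflV ν) m) ∧
      ∃ w, w ∈ weyl (PhiI S I ∩ Φ2) ∧ wAct (reflV ν) m = wAct w (wAct (reflV γ) m)) := by
      rintro ⟨hr1, hr2, w, hw⟩
      exact hc ⟨(hreg γ hγ).mpr hr1, (hreg ν hν).mpr hr2, w, (hiff w).mpr hw⟩
    unfold sgnW
    rw [dif_neg hc, dif_neg hc']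

end JantzenGVM
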